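/- Let ρ > 0, let ψ : ℝ^d → ℝ be differentiable and ρ-strongly convex, let L ≥ 0, let g : ℝ^d → ℝ be L-Lipschitz, let f : ℝ^d → ℝ be measurable with 0 < ∫_{ℝ^d} e^{−(f+g)(x)} dx < ∞, and let λ > 0. Let π and π_λ^ψ be the probability measures with Lebesgue densities proportional to e^{−(f+g)} and e^{−(f + env_{λ,g}^ψ)} respectively, where env_{λ,g}^ψ denotes either the left or the right Bregman–Moreau envelope of g. Then for every measurable h : ℝ^d → [0, ∞) that is integrable with respect to both π and π_λ^ψ, e^{−λL²/(2ρ)} · E_π[h] ≤ E_{π_λ^ψ}[h] ≤ e^{λL²/(2ρ)} · E_π[h]. -/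

import Mathlib

open scoped RealInnerProductSpace ENNReal
open MeasureTheory

/-- The Bregman divergence associated with a differentiable function `ψ`. -/
noncomputable def bregmanDiv {d : ℕ} (ψ : EuclideanSpace ℝ (Fin d) → ℝ)
    (x y : EuclideanSpace ℝ (Fin d)) : ℝ :=
  ψ x - ψ y - ⟪gradient ψ y, x - y⟫

/-- The left Bregman–Moreau envelope of `g` associated with `ψ`. -/
noncomputable def leftEnv {d : ℕ} (ψ g : EuclideanSpace ℝ (Fin d) → ℝ) (lam : ℝ)
    (x : EuclideanSpace ℝ (Fin d)) : ℝ :=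
  ⨅ y : EuclideanSpace ℝ (Fin d), (g y + (1 / lam) * bregmanDiv ψ y x)

/-- The right Bregman–Moreau envelope of `g` associated with `ψ`. -/
noncomputable def rightEnv {d : ℕ} (ψ g : EuclideanSpace ℝ (Fin d) → ℝ) (lam : ℝ)
    (x : EuclideanSpace ℝ (Fin d)) : ℝ :=
  ⨅ y : EuclideanSpace ℝ (Fin d), (g y + (1 / lam) * bregmanDiv ψ x y)

/-!
At `y = x` the penalty vanishes, so the envelope lies below `g`; conversely the Lipschitz bound
`g x ≤ g y + L r`, `r = dist x y`, and Young's inequality `L r ≤ ρ r² / (2λ) + λ L² / (2ρ)` show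
that it loses at most `c = λ L² / (2ρ)`. Hence `e^{-(f + g)} ≤ e^{-(f + env)} ≤ e^c e^{-(f + g)}`,
and the two normalizing constants satisfy the same inequalities. In either comparison of the
normalized densities the numerators contribute `1` and the normalizing constants `e^c`, or the
other way round, so the total factor is `e^c` and not `e^{2c}`.
-/

section Envelope

/-- The Moreau envelope of `g` whose quadratic penalty is replaced by a general divergence `D`.
The base point is the first argument of `D`, so that `leftEnv ψ` is the envelope for
`D x y = bregmanDiv ψ y x` and `rightEnv ψ` the one for `D = bregmanDiv ψ`. -/
noncomputable def moreauEnv {E : Type*} (D : E → E → ℝ) (g : E → ℝ) (lam : ℝ) (x : E) : ℝ :=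
  ⨅ y, (g y + (1 / lam) * D x y)

theorem mul_le_scaled_sq_add {ρ lam : ℝ} (hρ : 0 < ρ) (hlam : 0 < lam) (L r : ℝ) :
    L * r ≤ (1 / lam) * (ρ / 2 * r ^ 2) + lam * L ^ 2 / (2 * ρ) := by
  have hsq : (1 / lam) * (ρ / 2 * r ^ 2) + lam * L ^ 2 / (2 * ρ) - L * r =
      (ρ * r - lam * L) ^ 2 / (2 * lam * ρ) := by
    field_simp
    ring
  have hnonneg : 0 ≤ (ρ * r - lam * L) ^ 2 / (2 * lam * ρ) := by positivity
  linarith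

variable {E : Type*} [PseudoMetricSpace E] {D : E → E → ℝ} {g : E → ℝ} {ρ lam : ℝ} {L : NNReal}

theorem sub_le_add_of_lipschitz_of_quadratic_growth (hρ : 0 < ρ) (hlam : 0 < lam)
    (hD : ∀ x y, ρ / 2 * dist x y ^ 2 ≤ D x y) (hg : LipschitzWith L g) (x y : E) :
    g x - lam * L ^ 2 / (2 * ρ) ≤ g y + (1 / lam) * D x y := by
  have hlip : g x ≤ g y + L * dist x y := hg.le_add_mul x y
  have hyoung := mul_le_scaled_sq_add hρ hlam L (dist x y)
  have hpenalty : (1 / lam) * (ρ / 2 * dist x y ^ 2) ≤ (1 / lam) * D x y := by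
    gcongr
    exact hD x y
  linarith

theorem moreauEnv_le (hρ : 0 < ρ) (hlam : 0 < lam) (hD_self : ∀ x, D x x = 0)
    (hD : ∀ x y, ρ / 2 * dist x y ^ 2 ≤ D x y) (hg : LipschitzWith L g) (x : E) :
    moreauEnv D g lam x ≤ g x := by
  have hbdd : BddBelow (Set.range fun y => g y + (1 / lam) * D x y) :=
    ⟨_, Set.forall_mem_range.mpr
      (sub_le_add_of_lipschitz_of_quadratic_growth hρ hlam hD hg x)⟩
  calc moreauEnv D g lam x ≤ g x + (1 / lam) * D x x := ciInf_le hbdd x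
    _ = g x := by rw [hD_self, mul_zero, add_zero]

theorem le_moreauEnv_add (hρ : 0 < ρ) (hlam : 0 < lam)
    (hD : ∀ x y, ρ / 2 * dist x y ^ 2 ≤ D x y) (hg : LipschitzWith L g) (x : E) :
    g x ≤ moreauEnv D g lam x + lam * L ^ 2 / (2 * ρ) :=
  haveI : Nonempty E := ⟨x⟩
  sub_le_iff_le_add.mp <|
    le_ciInf (sub_le_add_of_lipschitz_of_quadratic_growth hρ hlam hD hg x)

end Envelope

section Bregman

variable {d : ℕ} {ψ : EuclideanSpace ℝ (Fin d) → ℝ}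

theorem bregmanDiv_self (x : EuclideanSpace ℝ (Fin d)) : bregmanDiv ψ x x = 0 := by
  simp [bregmanDiv]

theorem mul_dist_sq_le_bregmanDiv {ρ : ℝ}
    (hsc : ∀ y z, ψ z + ⟪gradient ψ z, y - z⟫ + ρ / 2 * ‖y - z‖ ^ 2 ≤ ψ y)
    (x y : EuclideanSpace ℝ (Fin d)) : ρ / 2 * dist x y ^ 2 ≤ bregmanDiv ψ x y := by
  rw [dist_eq_norm, bregmanDiv]
  linarith [hsc x y]

end Bregman

theorem ennreal_inv_le_mul_inv_of_le_mul {a b c : ℝ≥0∞} (hc₀ : c ≠ 0) (hc : c ≠ ∞)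
    (h : b ≤ c * a) : a⁻¹ ≤ c * b⁻¹ :=
  calc a⁻¹ = c * (c * a)⁻¹ := by
        rw [ENNReal.mul_inv (.inl hc₀) (.inl hc), ENNReal.mul_inv_cancel_left hc₀ hc]
    _ ≤ c * b⁻¹ := by gcongr

theorem ofReal_exp_neg_le_mul {u v a : ℝ} (h : v ≤ u + a) :
    ENNReal.ofReal (Real.exp (-u)) ≤
      ENNReal.ofReal (Real.exp a) * ENNReal.ofReal (Real.exp (-v)) := by
  rw [← ENNReal.ofReal_mul (Real.exp_nonneg a), ← Real.exp_add]
  gcongr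
  linarith

theorem integral_le_mul_integral_of_measure_le_smul {α : Type*} [MeasurableSpace α]
    {μ ν : Measure α} {c : ℝ} (hc : 0 ≤ c) (hμν : μ ≤ ENNReal.ofReal c • ν) {h : α → ℝ}
    (hnonneg : 0 ≤ h) (hint : Integrable h ν) : ∫ x, h x ∂μ ≤ c * ∫ x, h x ∂ν :=
  calc ∫ x, h x ∂μ ≤ ∫ x, h x ∂(ENNReal.ofReal c • ν) :=
        integral_mono_measure hμν (.of_forall hnonneg)
          (hint.smul_measure ENNReal.ofReal_ne_top)
    _ = c * ∫ x, h x ∂ν := by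
        rw [integral_smul_measure, ENNReal.toReal_ofReal hc, smul_eq_mul]

section Gibbs

variable {α : Type*} [MeasurableSpace α] {μ : Measure α} {U V : α → ℝ} {a b : ℝ}

/-- The normalizing constant of the Gibbs measure with potential `V`, valued in `ℝ≥0∞` so that it
makes sense without integrability. -/
noncomputable def partitionFunction (μ : Measure α) (V : α → ℝ) : ℝ≥0∞ :=
  ∫⁻ x, ENNReal.ofReal (Real.exp (-V x)) ∂μ

/-- The probability measure with `μ`-density proportional to `exp (-V)`. It is the zero measure
when the partition function is `∞`. -/
noncomputable def gibbsMeasure (μ : Measure α) (V : α → ℝ) : Measure α :=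
  μ.withDensity fun x => ENNReal.ofReal (Real.exp (-V x)) / partitionFunction μ V

theorem isProbabilityMeasure_gibbsMeasure (hZ₀ : partitionFunction μ V ≠ 0)
    (hZ : partitionFunction μ V ≠ ∞) : IsProbabilityMeasure (gibbsMeasure μ V) where
  measure_univ := by
    simp only [gibbsMeasure, div_eq_mul_inv]
    rw [withDensity_apply _ .univ, setLIntegral_univ,
      lintegral_mul_const' _ _ (ENNReal.inv_ne_top.mpr hZ₀)]
    exact ENNReal.mul_inv_cancel hZ₀ hZ

theorem partitionFunction_le_mul (hVU : ∀ x, V x ≤ U x + a) :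
    partitionFunction μ U ≤ ENNReal.ofReal (Real.exp a) * partitionFunction μ V :=
  (lintegral_mono fun x => ofReal_exp_neg_le_mul (hVU x)).trans_eq
    (lintegral_const_mul' _ _ ENNReal.ofReal_ne_top)

theorem gibbsMeasure_le_smul (hVU : ∀ x, V x ≤ U x + a) (hUV : ∀ x, U x ≤ V x + b) :
    gibbsMeasure μ U ≤ ENNReal.ofReal (Real.exp (a + b)) • gibbsMeasure μ V := by
  have hZ : (partitionFunction μ U)⁻¹ ≤
      ENNReal.ofReal (Real.exp b) * (partitionFunction μ V)⁻¹ :=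
    ennreal_inv_le_mul_inv_of_le_mul (ENNReal.ofReal_pos.mpr (Real.exp_pos b)).ne'
      ENNReal.ofReal_ne_top (partitionFunction_le_mul hUV)
  rw [gibbsMeasure, gibbsMeasure, ← withDensity_smul' _ _ ENNReal.ofReal_ne_top]
  refine withDensity_mono (.of_forall fun x => ?_)
  calc ENNReal.ofReal (Real.exp (-U x)) / partitionFunction μ U
      ≤ ENNReal.ofReal (Real.exp a) * ENNReal.ofReal (Real.exp (-V x)) *
          (ENNReal.ofReal (Real.exp b) * (partitionFunction μ V)⁻¹) :=
        mul_le_mul' (ofReal_exp_neg_le_mul (hVU x)) hZ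
    _ = ENNReal.ofReal (Real.exp (a + b)) *
          (ENNReal.ofReal (Real.exp (-V x)) / partitionFunction μ V) := by
        rw [Real.exp_add, ENNReal.ofReal_mul (Real.exp_nonneg a), div_eq_mul_inv]
        ring

theorem isProbabilityMeasure_gibbsMeasure_of_le_of_le (hVU : ∀ x, V x ≤ U x + a)
    (hUV : ∀ x, U x ≤ V x + b) (hZ₀ : partitionFunction μ V ≠ 0)
    (hZ : partitionFunction μ V ≠ ∞) : IsProbabilityMeasure (gibbsMeasure μ U) := by
  refine isProbabilityMeasure_gibbsMeasure (fun hU => hZ₀ ?_) (ne_top_of_le_ne_top ?_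
    (partitionFunction_le_mul hVU))
  · simpa only [hU, mul_zero, nonpos_iff_eq_zero] using partitionFunction_le_mul (μ := μ) hUV
  · exact ENNReal.mul_ne_top ENNReal.ofReal_ne_top hZ

theorem integrable_gibbsMeasure_of_le_of_le (hVU : ∀ x, V x ≤ U x + a)
    (hUV : ∀ x, U x ≤ V x + b) {h : α → ℝ} (hint : Integrable h (gibbsMeasure μ V)) :
    Integrable h (gibbsMeasure μ U) :=
  hint.of_measure_le_smul ENNReal.ofReal_ne_top (gibbsMeasure_le_smul hVU hUV)

theorem integral_gibbsMeasure_le_exp_mul (hVU : ∀ x, V x ≤ U x + a) (hUV : ∀ x, U x ≤ V x + b)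
    {h : α → ℝ} (hnonneg : 0 ≤ h) (hint : Integrable h (gibbsMeasure μ V)) :
    ∫ x, h x ∂gibbsMeasure μ U ≤ Real.exp (a + b) * ∫ x, h x ∂gibbsMeasure μ V :=
  integral_le_mul_integral_of_measure_le_smul (Real.exp_nonneg _)
    (gibbsMeasure_le_smul hVU hUV) hnonneg hint

end Gibbs

theorem stmt7_general {E : Type*} [PseudoMetricSpace E] [MeasurableSpace E] {μ : Measure E}
    {D : E → E → ℝ} {f g : E → ℝ} {ρ lam : ℝ} {L : NNReal} (hρ : 0 < ρ) (hlam : 0 < lam)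
    (hD_self : ∀ x, D x x = 0) (hD : ∀ x y, ρ / 2 * dist x y ^ 2 ≤ D x y)
    (hg : LipschitzWith L g) (hZ₀ : partitionFunction μ (f + g) ≠ 0)
    (hZ : partitionFunction μ (f + g) ≠ ∞) :
    IsProbabilityMeasure (gibbsMeasure μ (f + moreauEnv D g lam)) ∧
    ∀ h : E → ℝ, 0 ≤ h → Integrable h (gibbsMeasure μ (f + g)) →
      Integrable h (gibbsMeasure μ (f + moreauEnv D g lam)) ∧
      Real.exp (-(lam * L ^ 2 / (2 * ρ))) * ∫ x, h x ∂gibbsMeasure μ (f + g) ≤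
        ∫ x, h x ∂gibbsMeasure μ (f + moreauEnv D g lam) ∧
      ∫ x, h x ∂gibbsMeasure μ (f + moreauEnv D g lam) ≤
        Real.exp (lam * L ^ 2 / (2 * ρ)) * ∫ x, h x ∂gibbsMeasure μ (f + g) := by
  have hupper (x : E) : (f + g) x ≤ (f + moreauEnv D g lam) x + lam * L ^ 2 / (2 * ρ) := by
    simpa only [Pi.add_apply, add_assoc, add_le_add_iff_left] using
      le_moreauEnv_add hρ hlam hD hg x
  have hlower (x : E) : (f + moreauEnv D g lam) x ≤ (f + g) x + 0 := by
    simpa only [Pi.add_apply, add_zero, add_le_add_iff_left] using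
      moreauEnv_le hρ hlam hD_self hD hg x
  refine ⟨isProbabilityMeasure_gibbsMeasure_of_le_of_le hupper hlower hZ₀ hZ,
    fun h hnonneg hint => ?_⟩
  have hint' := integrable_gibbsMeasure_of_le_of_le hupper hlower hint
  refine ⟨hint', ?_, ?_⟩
  · rw [Real.exp_neg, inv_mul_le_iff₀ (Real.exp_pos _)]
    simpa only [zero_add] using integral_gibbsMeasure_le_exp_mul hlower hupper hnonneg hint'
  · simpa only [add_zero] using integral_gibbsMeasure_le_exp_mul hupper hlower hnonneg hint

/-- For nonnegative `h` integrable w.r.t. both Gibbs measures,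
`e^{−λL²/(2ρ)} E_π[h] ≤ E_{π_λ^ψ}[h] ≤ e^{λL²/(2ρ)} E_π[h]`. -/
theorem stmt7 {d : ℕ} (ρ : ℝ) (hρ : 0 < ρ)
    (ψ : EuclideanSpace ℝ (Fin d) → ℝ)
    (hdiff : Differentiable ℝ ψ)
    (hsc : ∀ y ytil : EuclideanSpace ℝ (Fin d),
      ψ ytil + ⟪gradient ψ ytil, y - ytil⟫ + ρ / 2 * ‖y - ytil‖ ^ 2 ≤ ψ y)
    (L : ℝ) (hL : 0 ≤ L)
    (g : EuclideanSpace ℝ (Fin d) → ℝ)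
    (hg : ∀ x y, |g x - g y| ≤ L * ‖x - y‖)
    (f : EuclideanSpace ℝ (Fin d) → ℝ) (hf : Measurable f)
    (hpos : 0 < ∫⁻ x, ENNReal.ofReal (Real.exp (-(f x + g x))))
    (hfin : (∫⁻ x, ENNReal.ofReal (Real.exp (-(f x + g x)))) < ∞)
    (lam : ℝ) (hlam : 0 < lam)
    (env : EuclideanSpace ℝ (Fin d) → ℝ)
    (henv : env = leftEnv ψ g lam ∨ env = rightEnv ψ g lam)
    (π πlam : Measure (EuclideanSpace ℝ (Fin d)))
    (hπ : π = volume.withDensity fun x =>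
      ENNReal.ofReal (Real.exp (-(f x + g x))) /
        ∫⁻ y, ENNReal.ofReal (Real.exp (-(f y + g y))))
    (hπlam : πlam = volume.withDensity fun x =>
      ENNReal.ofReal (Real.exp (-(f x + env x))) /
        ∫⁻ y, ENNReal.ofReal (Real.exp (-(f y + env y)))) :
    ∀ h : EuclideanSpace ℝ (Fin d) → ℝ, Measurable h → (∀ x, 0 ≤ h x) →
      Integrable h π → Integrable h πlam →
      Real.exp (-(lam * L ^ 2 / (2 * ρ))) * ∫ x, h x ∂π ≤ ∫ x, h x ∂πlam ∧
      (∫ x, h x ∂πlam) ≤ Real.exp (lam * L ^ 2 / (2 * ρ)) * ∫ x, h x ∂π := by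
  intro h _ hnonneg hint _
  subst hπ hπlam
  lift L to NNReal using hL
  have hLip : LipschitzWith L g :=
    .of_dist_le_mul (by simpa only [dist_eq_norm, Real.norm_eq_abs] using hg)
  rcases henv with rfl | rfl
  · exact ((stmt7_general (D := fun x y => bregmanDiv ψ y x) hρ hlam bregmanDiv_self
      (fun x y => dist_comm x y ▸ mul_dist_sq_le_bregmanDiv hsc y x) hLip hpos.ne' hfin.ne).2
      h hnonneg hint).2
  · exact ((stmt7_general hρ hlam bregmanDiv_self (mul_dist_sq_le_bregmanDiv hsc) hLip
      hpos.ne' hfin.ne).2 h hnonneg hint).2
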